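/- Let ψ : ℝ^n → ℝ be μ-strongly convex (μ > 0) and let F : ℝ^n → ℝ be convex and differentiable with X̄ = argmin F nonempty and F̄ = min F. If F satisfies the Bregman distance growth condition with constant γ > 0 with respect to ψ, i.e., F(x) − F̄ ≥ γ·inf_{z∈X̄} D_ψ^{x*}(x, z) for every x ∈ ℝ^n and every x* ∈ ∂ψ(x), then F satisfies the Polyak–Łojasiewicz inequality: (γμ/2)·(F(x) − F̄) ≤ ‖∇F(x)‖² for all x ∈ ℝ^n (equivalently, √(γμ/2)·√(F(x) − F̄) ≤ ‖∇F(x)‖). -/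

import Mathlib

/-!
Let `δ = F z - F̄`. A subgradient `g` of `F` at `z` gives `δ ≤ ‖g‖ ‖w - z‖` for every minimizer `w`,
and strong convexity bounds `‖w - z‖²` by `(2/μ) D_ψ(z, w)`, so `(μ/2) δ² ≤ ‖g‖² D_ψ(z, w)`. Taking
the infimum over `w` and applying the growth condition yields `(γμ/2) δ² ≤ ‖g‖² δ`, and `δ` cancels.
Pairing subgradients with vectors by duality, this makes sense in any real normed space.

The growth condition is vacuous at a point where `ψ` has no subgradient. A continuous convex `ψ`
has one at every `x`: separate `(x, ψ x)` from the strict epigraph, which is open and convex.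
-/

open MeasureTheory ProbabilityTheory RealInnerProductSpace
open scoped BigOperators

noncomputable section

/-- `xs` is a subgradient of `ψ` at `x`: `ψ(y) ≥ ψ(x) + ⟨xs, y - x⟩` for all `y`. -/
def IsSubgrad {n : ℕ} (ψ : EuclideanSpace ℝ (Fin n) → ℝ) (x xs : EuclideanSpace ℝ (Fin n)) : Prop :=
  ∀ y, ψ x + ⟪xs, y - x⟫ ≤ ψ y

/-- Bregman distance `D_ψ^{xs}(x, y) = ψ(y) - ψ(x) - ⟨xs, y - x⟩`. -/
def Breg {n : ℕ} (ψ : EuclideanSpace ℝ (Fin n) → ℝ) (x xs y : EuclideanSpace ℝ (Fin n)) : ℝ :=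
  ψ y - ψ x - ⟪xs, y - x⟫

/-- `ψ` is `α`-strongly convex:
`ψ(y) ≥ ψ(x) + ⟨xs, y - x⟩ + (α/2)‖y - x‖²` for all `x, y` and all subgradients `xs ∈ ∂ψ(x)`. -/
def SubgradStrongConvex {n : ℕ} (ψ : EuclideanSpace ℝ (Fin n) → ℝ) (α : ℝ) : Prop :=
  ∀ x y xs, IsSubgrad ψ x xs → ψ x + ⟪xs, y - x⟫ + α / 2 * ‖y - x‖ ^ 2 ≤ ψ y

/-- Fenchel conjugate `ψ*(p) = sup_z (⟨p, z⟩ - ψ(z))`. -/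
def fenchel {n : ℕ} (ψ : EuclideanSpace ℝ (Fin n) → ℝ) (p : EuclideanSpace ℝ (Fin n)) : ℝ :=
  ⨆ z, (⟪p, z⟫ - ψ z)

/-- `xhat` is the Bregman projection of `x` onto `C` w.r.t. `ψ` and the subgradient `xs`:
it belongs to `C` and minimizes `y ↦ D_ψ^{xs}(x, y)` over `C`. -/
def IsBregProj {n : ℕ} (ψ : EuclideanSpace ℝ (Fin n) → ℝ) (x xs : EuclideanSpace ℝ (Fin n))
    (C : Set (EuclideanSpace ℝ (Fin n))) (xhat : EuclideanSpace ℝ (Fin n)) : Prop :=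
  xhat ∈ C ∧ ∀ y ∈ C, Breg ψ x xs xhat ≤ Breg ψ x xs y

/-- The proximity objective `F(x) = (1/m) ∑_{i=1}^m f_i(x)`. -/
def Fobj {n m : ℕ} (f : Fin m → EuclideanSpace ℝ (Fin n) → ℝ) (v : EuclideanSpace ℝ (Fin n)) : ℝ :=
  (m : ℝ)⁻¹ * ∑ i, f i v

/-- The set of (global) minimizers of `F = (1/m) ∑ f_i`. -/
def ArgminSet {n m : ℕ} (f : Fin m → EuclideanSpace ℝ (Fin n) → ℝ) :
    Set (EuclideanSpace ℝ (Fin n)) :=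
  {z | ∀ y, Fobj f z ≤ Fobj f y}

/-- Squared Bregman distance from `z` (with subgradient `zs`) to a set `X`:
`inf_{w ∈ X} D_ψ^{zs}(z, w)`. -/
def distSq {n : ℕ} (ψ : EuclideanSpace ℝ (Fin n) → ℝ) (z zs : EuclideanSpace ℝ (Fin n))
    (X : Set (EuclideanSpace ℝ (Fin n))) : ℝ :=
  ⨅ w : X, Breg ψ z zs (w : EuclideanSpace ℝ (Fin n))

/-- `l` is a subgradient of `ψ` at `x`. Subgradients are continuous linear functionals, so that no
inner product is needed; `IsSubgrad` is the case where `l` is represented by a vector. -/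
def HasSubgradientAt {E : Type*} [AddCommGroup E] [Module ℝ E] [TopologicalSpace E]
    (ψ : E → ℝ) (l : StrongDual ℝ E) (x : E) : Prop :=
  ∀ y, ψ x + l (y - x) ≤ ψ y

/-- The Bregman distance `D_ψ^l(x, y)` for a functional `l`, generalizing `Breg`. As there, `l`
belongs to the base point `x`, which comes first. -/
def bregmanDist {E : Type*} [AddCommGroup E] [Module ℝ E] [TopologicalSpace E]
    (ψ : E → ℝ) (l : StrongDual ℝ E) (x y : E) : ℝ :=
  ψ y - ψ x - l (y - x)

/-- The Bregman distance `inf_{w ∈ X} D_ψ^l(x, w)` from a point to a set, generalizing `distSq`.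
The infimum is `0` when `X` is empty or the distances are unbounded below. -/
def infBregmanDist {E : Type*} [AddCommGroup E] [Module ℝ E] [TopologicalSpace E]
    (ψ : E → ℝ) (l : StrongDual ℝ E) (x : E) (X : Set E) : ℝ :=
  ⨅ w : X, bregmanDist ψ l x w

section Existence

variable {E : Type*} [AddCommGroup E] [Module ℝ E] [TopologicalSpace E] [IsTopologicalAddGroup E]
  [ContinuousSMul ℝ E] {ψ : E → ℝ}

lemma exists_strongDual_lt_on_strictEpigraph (hψ : ConvexOn ℝ Set.univ ψ) (hcont : Continuous ψ)
    (x : E) :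
    ∃ f : StrongDual ℝ (E × ℝ), ∀ y t, ψ y < t → f (x, ψ x) < f (y, t) := by
  have hopen : IsOpen {p : E × ℝ | p.1 ∈ Set.univ ∧ ψ p.1 < p.2} := by
    simpa only [Set.mem_univ, true_and] using
      isOpen_lt (hcont.fst' : Continuous fun p : E × ℝ => ψ p.1) continuous_snd
  have hnotMem : (x, ψ x) ∉ {p : E × ℝ | p.1 ∈ Set.univ ∧ ψ p.1 < p.2} :=
    fun h => lt_irrefl _ h.2
  obtain ⟨f, hf⟩ := geometric_hahn_banach_point_open hψ.convex_strict_epigraph hopen hnotMem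
  exact ⟨f, fun y t ht => hf (y, t) ⟨Set.mem_univ y, ht⟩⟩

lemma exists_hasSubgradientAt (hψ : ConvexOn ℝ Set.univ ψ) (hcont : Continuous ψ) (x : E) :
    ∃ l, HasSubgradientAt ψ l x := by
  obtain ⟨f, hf⟩ := exists_strongDual_lt_on_strictEpigraph hψ hcont x
  have hsplit (y : E) (t : ℝ) : f (y, t) = f (y, 0) + t * f (0, 1) := by
    rw [← smul_eq_mul, ← map_smul, ← map_add]
    simp
  -- The separating hyperplane is not vertical: test it at a point straight above `(x, ψ x)`.
  have hpos : 0 < f (0, 1) := by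
    have habove := hf x (ψ x + 1) (lt_add_one _)
    rw [hsplit x (ψ x), hsplit x (ψ x + 1)] at habove
    linarith
  refine ⟨-(f (0, 1))⁻¹ • f.comp (.inl ℝ E ℝ), fun y => le_of_forall_gt_imp_ge_of_dense ?_⟩
  intro t ht
  have hslope : (f (0, 1))⁻¹ * (f (x, 0) - f (y, 0)) ≤ t - ψ x := by
    rw [inv_mul_le_iff₀ hpos]
    have hsep := hf y t ht
    rw [hsplit x, hsplit y] at hsep
    linarith
  have heval : (-(f (0, 1))⁻¹ • f.comp (.inl ℝ E ℝ)) (y - x) =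
      (f (0, 1))⁻¹ * (f (x, 0) - f (y, 0)) := by
    simp only [map_sub, smul_apply, ContinuousLinearMap.comp_apply,
      ContinuousLinearMap.inl_apply, smul_eq_mul]
    ring
  linarith

end Existence

lemma add_le_of_convexOn_of_hasLineDerivAt {E : Type*} [AddCommGroup E] [Module ℝ E]
    {s : Set E} {F : E → ℝ} {x v : E} {d : ℝ} (hF : ConvexOn ℝ s F) (hx : x ∈ s) (hxv : x + v ∈ s)
    (hd : HasLineDerivAt ℝ F d x v) : F x + d ≤ F (x + v) := by
  have hline : ConvexOn ℝ ((AffineMap.lineMap (k := ℝ) x (x + v)) ⁻¹' s)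
      (fun t : ℝ => F (x + t • v)) := by
    simpa [Function.comp_def, AffineMap.lineMap_apply, add_comm] using
      hF.comp_affineMap (AffineMap.lineMap (k := ℝ) x (x + v))
  have hslope := hline.le_slope_of_hasDerivAt (x := 0) (y := 1) (by simpa using hx)
    (by simpa using hxv) one_pos hd
  simp only [slope_def_field, one_smul, zero_smul, add_zero, sub_zero, div_one] at hslope
  linarith

section Normed

variable {E : Type*} [NormedAddCommGroup E] [NormedSpace ℝ E] {ψ F : E → ℝ} {l g : StrongDual ℝ E}
  {X : Set E} {z : E} {μ γ m : ℝ}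

lemma hasSubgradientAt_of_hasFDerivAt (hF : ConvexOn ℝ Set.univ F) (hg : HasFDerivAt F g z) :
    HasSubgradientAt F g z := by
  intro y
  simpa only [add_sub_cancel] using
    add_le_of_convexOn_of_hasLineDerivAt hF (Set.mem_univ z) (Set.mem_univ _)
      (hg.hasLineDerivAt (y - z))

namespace HasSubgradientAt

lemma sub_le_norm_mul_norm (hg : HasSubgradientAt F g z) (w : E) :
    F z - F w ≤ ‖g‖ * ‖w - z‖ := by
  have hdual : -g (w - z) ≤ ‖g‖ * ‖w - z‖ := (neg_le_abs _).trans (g.le_opNorm _)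
  linarith [hg w]

lemma mul_sq_sub_le_mul_infBregmanDist (hg : HasSubgradientAt F g z) (hX : X.Nonempty)
    (hXm : ∀ w ∈ X, F w ≤ m) (hm : m ≤ F z) (hμ : 0 ≤ μ)
    (hstrong : ∀ w ∈ X, μ / 2 * ‖w - z‖ ^ 2 ≤ bregmanDist ψ l z w) :
    μ / 2 * (F z - m) ^ 2 ≤ ‖g‖ ^ 2 * infBregmanDist ψ l z X := by
  have : Nonempty X := hX.to_subtype
  rw [infBregmanDist, Real.mul_iInf_of_nonneg (sq_nonneg _)]
  refine le_ciInf fun ⟨w, hw⟩ => ?_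
  have : 0 ≤ F z - m := sub_nonneg.2 hm
  have hgap : F z - m ≤ ‖g‖ * ‖w - z‖ := by
    linarith [hg.sub_le_norm_mul_norm w, hXm w hw]
  calc μ / 2 * (F z - m) ^ 2 ≤ μ / 2 * (‖g‖ * ‖w - z‖) ^ 2 := by gcongr
    _ = ‖g‖ ^ 2 * (μ / 2 * ‖w - z‖ ^ 2) := by ring
    _ ≤ ‖g‖ ^ 2 * bregmanDist ψ l z w := by gcongr; exact hstrong w hw

lemma mul_sub_le_sq_norm_of_growth (hg : HasSubgradientAt F g z) (hX : X.Nonempty)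
    (hXm : ∀ w ∈ X, F w ≤ m) (hμ : 0 ≤ μ) (hγ : 0 ≤ γ)
    (hstrong : ∀ w ∈ X, μ / 2 * ‖w - z‖ ^ 2 ≤ bregmanDist ψ l z w)
    (hgrowth : γ * infBregmanDist ψ l z X ≤ F z - m) :
    γ * μ / 2 * (F z - m) ≤ ‖g‖ ^ 2 := by
  rcases le_or_gt (F z - m) 0 with hgap | hgap
  · exact (mul_nonpos_of_nonneg_of_nonpos (by positivity) hgap).trans (sq_nonneg _)
  · refine le_of_mul_le_mul_right ?_ hgap
    have hbound := hg.mul_sq_sub_le_mul_infBregmanDist hX hXm (sub_pos.1 hgap).le hμ hstrong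
    calc γ * μ / 2 * (F z - m) * (F z - m) = γ * (μ / 2 * (F z - m) ^ 2) := by ring
      _ ≤ γ * (‖g‖ ^ 2 * infBregmanDist ψ l z X) := by gcongr
      _ = ‖g‖ ^ 2 * (γ * infBregmanDist ψ l z X) := by ring
      _ ≤ ‖g‖ ^ 2 * (F z - m) := by gcongr

end HasSubgradientAt

theorem stmt19_general (hψ : ConvexOn ℝ Set.univ ψ) (hcont : Continuous ψ) (hμ : 0 ≤ μ)
    (hγ : 0 ≤ γ)
    (hstrong : ∀ l, HasSubgradientAt ψ l z → ∀ w ∈ X, μ / 2 * ‖w - z‖ ^ 2 ≤ bregmanDist ψ l z w)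
    (hg : HasSubgradientAt F g z) (hX : X.Nonempty) (hXm : ∀ w ∈ X, F w ≤ m)
    (hgrowth : ∀ l, HasSubgradientAt ψ l z → γ * infBregmanDist ψ l z X ≤ F z - m) :
    γ * μ / 2 * (F z - m) ≤ ‖g‖ ^ 2 := by
  obtain ⟨l, hl⟩ := exists_hasSubgradientAt hψ hcont z
  exact hg.mul_sub_le_sq_norm_of_growth hX hXm hμ hγ (hstrong l hl) (hgrowth l hl)

end Normed

section Euclidean

open InnerProductSpace (toDual)

variable {n : ℕ} {ψ : EuclideanSpace ℝ (Fin n) → ℝ} {x xs : EuclideanSpace ℝ (Fin n)}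

lemma forall_hasSubgradientAt_iff {P : StrongDual ℝ (EuclideanSpace ℝ (Fin n)) → Prop} :
    (∀ l, HasSubgradientAt ψ l x → P l) ↔ ∀ xs, IsSubgrad ψ x xs → P (toDual ℝ _ xs) :=
  (toDual ℝ _).surjective.forall

lemma infBregmanDist_toDual (X : Set (EuclideanSpace ℝ (Fin n))) :
    infBregmanDist ψ (toDual ℝ _ xs) x X = distSq ψ x xs X :=
  rfl

lemma SubgradStrongConvex.mul_sq_norm_le_bregmanDist {μ : ℝ} (hψ : SubgradStrongConvex ψ μ)
    {l : StrongDual ℝ (EuclideanSpace ℝ (Fin n))} (hl : HasSubgradientAt ψ l x)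
    (y : EuclideanSpace ℝ (Fin n)) : μ / 2 * ‖y - x‖ ^ 2 ≤ bregmanDist ψ l x y := by
  obtain ⟨xs, rfl⟩ := (toDual ℝ _).surjective l
  rw [bregmanDist, InnerProductSpace.toDual_apply_apply]
  linarith [hψ x y xs hl]

end Euclidean

/-- BDGC implies the Polyak–Łojasiewicz inequality:
if `F(x) − F̄ ≥ γ·inf_{z∈X̄} D_ψ^{x*}(x, z)` for every `x` and every `x* ∈ ∂ψ(x)`, then
`(γμ/2)(F(x) − F̄) ≤ ‖∇F(x)‖²` for all `x`. -/
theorem stmt19 {n : ℕ} (ψ : EuclideanSpace ℝ (Fin n) → ℝ) (μ : ℝ) (hμ : 0 < μ)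
    (hψconv : ConvexOn ℝ Set.univ ψ) (hsc : SubgradStrongConvex ψ μ)
    (F : EuclideanSpace ℝ (Fin n) → ℝ) (hFconv : ConvexOn ℝ Set.univ F)
    (F' : EuclideanSpace ℝ (Fin n) → EuclideanSpace ℝ (Fin n))
    (hFdiff : ∀ z, HasGradientAt F (F' z) z)
    (hXne : {z | ∀ y, F z ≤ F y}.Nonempty)
    (γ : ℝ) (hγ : 0 < γ)
    (hBDGC : ∀ z zs, IsSubgrad ψ z zs →
      γ * distSq ψ z zs {z | ∀ y, F z ≤ F y} ≤ F z - ⨅ y, F y) :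
    ∀ z, γ * μ / 2 * (F z - ⨅ y, F y) ≤ ‖F' z‖ ^ 2 := by
  intro z
  have hgrad := hasSubgradientAt_of_hasFDerivAt hFconv (hFdiff z).hasFDerivAt
  have hgrowth : ∀ l, HasSubgradientAt ψ l z →
      γ * infBregmanDist ψ l z {z | ∀ y, F z ≤ F y} ≤ F z - ⨅ y, F y := by
    simpa only [forall_hasSubgradientAt_iff, infBregmanDist_toDual] using hBDGC z
  simpa only [LinearIsometryEquiv.norm_map] using
    stmt19_general hψconv hψconv.locallyLipschitz.continuous hμ.le hγ.le
      (fun _ hl w _ => hsc.mul_sq_norm_le_bregmanDist hl w) hgrad hXne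
      (fun _ hw => le_ciInf hw) hgrowth
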